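/- Let Δ ≥ 3 be an integer, δ ∈ (0,1), let λ > 0 be up-to-Δ unique with gap δ, and let T be a finite tree of maximum degree at most Δ rooted at r. For ℓ ≥ 2 define R_r^max(ℓ) = sup_{p : L_r(ℓ) → [0,1]} R_r(ν_p) and R_r^min(ℓ) = inf_{p : L_r(ℓ) → [0,1]} R_r(ν_p). Then R_r^max(ℓ) − R_r^min(ℓ) ≤ (1−δ)^{(ℓ−2)/2} · λ·((1+λ)^Δ − 1). -/

import Mathlib

open scoped Classical
open Finset

noncomputable section

namespace PaperStmt

variable {V : Type*} [Fintype V]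

/-- The set of vertices at distance exactly `ℓ` from the root `r`. -/
def levelSet (G : SimpleGraph V) (r : V) (ℓ : ℕ) : Finset V :=
  Finset.univ.filter fun v => G.dist r v = ℓ

/-- `S` is an independent set of `G`. -/
def IsIndepSet (G : SimpleGraph V) (S : Finset V) : Prop :=
  ∀ i ∈ S, ∀ j ∈ S, ¬ G.Adj i j

/-- Weight of `S` in the level-`ℓ` pinned hardcore measure on the truncation
`T^{≤ℓ}`: the vertices in `P` (a subset of level `ℓ`) have their marginals pinned
by `p`, vertices strictly inside the ball contribute a factor `λ`. -/
def pinWeight (G : SimpleGraph V) (r : V) (lam : ℝ) (ℓ : ℕ) (P : Finset V)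
    (p : V → ℝ) (S : Finset V) : ℝ :=
  if IsIndepSet G S ∧ ∀ v ∈ S, G.dist r v ≤ ℓ then
    lam ^ (S.filter fun v => G.dist r v < ℓ).card
      * (∏ u ∈ P ∩ S, p u) * (∏ u ∈ P \ S, (1 - p u))
  else 0

/-- Probability that `x ∈ S` under the distribution proportional to the weight `w`. -/
def prMem (w : Finset V → ℝ) (x : V) : ℝ :=
  (∑ S : Finset V, if x ∈ S then w S else 0) / (∑ S : Finset V, w S)

/-- The ratio `R = Pr[x ∈ S] / (1 - Pr[x ∈ S])` for the distribution proportional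
to the weight `w`. -/
def ratio (w : Finset V → ℝ) (x : V) : ℝ := prMem w x / (1 - prMem w x)

/-- Weight realizing `ν_p^{v,in}`: the level-`ℓ(v)` pinned measure with `v`
conditioned to be in `S` and the other level-`ℓ(v)` vertices pinned by `p`. -/
def wIn (G : SimpleGraph V) (r : V) (lam : ℝ) (v : V) (p : V → ℝ) :
    Finset V → ℝ :=
  fun S => if v ∈ S then
    pinWeight G r lam (G.dist r v) ((levelSet G r (G.dist r v)).erase v) p S else 0

/-- Weight realizing `ν_p^{v,out}`. -/
def wOut (G : SimpleGraph V) (r : V) (lam : ℝ) (v : V) (p : V → ℝ) :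
    Finset V → ℝ :=
  fun S => if v ∉ S then
    pinWeight G r lam (G.dist r v) ((levelSet G r (G.dist r v)).erase v) p S else 0

/-- The `R`-pseudoinfluence `ℛ_r^v` of `v` on the root `r`. -/
def Rpseudo (G : SimpleGraph V) (r : V) (lam : ℝ) (v : V) : ℝ :=
  sSup {x : ℝ | ∃ p : V → ℝ, (∀ u, 0 ≤ p u ∧ p u ≤ 1) ∧
    x = |ratio (wIn G r lam v p) r - ratio (wOut G r lam v p) r|}

/-- The pseudoinfluence `ℐ_r^v` of `v` on the root `r` (probability version). -/
def Ipseudo (G : SimpleGraph V) (r : V) (lam : ℝ) (v : V) : ℝ :=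
  sSup {x : ℝ | ∃ p : V → ℝ, (∀ u, 0 ≤ p u ∧ p u ≤ 1) ∧
    x = |prMem (wIn G r lam v p) r - prMem (wOut G r lam v p) r|}

/-- The vertex set of the subtree `T_u`: vertices `w` such that `u` lies on the
path from `r` to `w`. -/
def subtreeSet (G : SimpleGraph V) (r u : V) : Set V :=
  {w | G.dist r w = G.dist r u + G.dist u w}

/-- The subtree `T_u` as an induced subgraph. -/
def subtree (G : SimpleGraph V) (r u : V) : SimpleGraph (subtreeSet G r u) :=
  G.induce (subtreeSet G r u)

/-- `λ` is up-to-`Δ` unique with gap `δ`. -/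
def UpToUnique (Δ : ℕ) (lam δ : ℝ) : Prop :=
  ∀ d : ℕ, 1 ≤ d → d ≤ Δ - 1 → ∀ R : ℝ, 0 < R → lam = R * (1 + R) ^ d →
    (d : ℝ) * R / (1 + R) ≤ 1 - δ

/-- `R_r^max(ℓ)`: the supremum over boundary marginals `p` at level `ℓ` of the
ratio `R_r(ν_p)`. -/
def Rmax (G : SimpleGraph V) (r : V) (lam : ℝ) (ℓ : ℕ) : ℝ :=
  sSup {x : ℝ | ∃ p : V → ℝ, (∀ u, 0 ≤ p u ∧ p u ≤ 1) ∧
    x = ratio (pinWeight G r lam ℓ (levelSet G r ℓ) p) r}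

/-- `R_r^min(ℓ)`: the infimum over boundary marginals `p` at level `ℓ` of the
ratio `R_r(ν_p)`. -/
def Rmin (G : SimpleGraph V) (r : V) (lam : ℝ) (ℓ : ℕ) : ℝ :=
  sInf {x : ℝ | ∃ p : V → ℝ, (∀ u, 0 ≤ p u ∧ p u ≤ 1) ∧
    x = ratio (pinWeight G r lam ℓ (levelSet G r ℓ) p) r}

/-- A uniqueness bound at the positive fixed point controls the two-step decay
`d² · x/(1+x) · f/(1+f)`, `f = λ/(1+x)^d`, at every `x ≥ 0`. -/
lemma symmetric_decay_le {d : ℕ} (hd : 1 ≤ d) {lam κ : ℝ} (hlam : 0 < lam) (hκ : κ < 1)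
    (h : ∀ R : ℝ, 0 < R → lam = R * (1 + R) ^ d → (d : ℝ) * R / (1 + R) ≤ κ)
    {x : ℝ} (hx : 0 ≤ x) :
    (d : ℝ) ^ 2 * (x / (1 + x)) *
      ((lam / (1 + x) ^ d) / (1 + lam / (1 + x) ^ d)) ≤ κ := by
  have hd' : (1 : ℝ) ≤ d := by exact_mod_cast hd
  obtain ⟨R, hR0, hR⟩ : ∃ R : ℝ, 0 < R ∧ lam = R * (1 + R) ^ d := by
    have hc : ContinuousOn (fun R : ℝ => R * (1 + R) ^ d) (Set.Icc 0 lam) := by fun_prop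
    have hmem : lam ∈ Set.Icc ((0 : ℝ) * (1 + 0) ^ d) (lam * (1 + lam) ^ d) := by
      refine ⟨by simpa using hlam.le, ?_⟩
      have : 1 ≤ (1 + lam) ^ d := one_le_pow₀ (by linarith)
      nlinarith
    obtain ⟨R, hRm, hR⟩ := intermediate_value_Icc hlam.le hc hmem
    refine ⟨R, lt_of_le_of_ne hRm.1 ?_, hR.symm⟩
    rintro rfl
    simp at hR
    exact hlam.ne hR
  obtain ⟨y, hy0, hy⟩ : ∃ y : ℝ, 0 ≤ y ∧ d * y - lam / (1 + y) ^ d = 1 := by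
    have hc : ContinuousOn (fun y : ℝ => d * y - lam / (1 + y) ^ d) (Set.Icc 0 (1 + lam)) := by
      refine ContinuousOn.sub (by fun_prop) (ContinuousOn.div (by fun_prop) (by fun_prop) ?_)
      intro z hz
      have : 0 < 1 + z := by linarith [hz.1]
      positivity
    have hmem : (1 : ℝ) ∈ Set.Icc ((d : ℝ) * 0 - lam / (1 + 0) ^ d)
        (d * (1 + lam) - lam / (1 + (1 + lam)) ^ d) := by
      refine ⟨by simp; linarith, ?_⟩
      have : lam / (1 + (1 + lam)) ^ d ≤ lam :=
        div_le_self hlam.le (one_le_pow₀ (by linarith))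
      nlinarith
    obtain ⟨y, hym, hy⟩ := intermediate_value_Icc (by linarith) hc hmem
    exact ⟨y, hym.1, hy⟩
  set g := lam / (1 + y) ^ d with hg
  have hg0 : 0 < g := by positivity
  have hy1 : 0 < y := by nlinarith
  have hRκ := h R hR0 hR
  rw [div_le_iff₀ (by linarith)] at hRκ
  have hRy : R ≤ y := by
    by_contra! hlt
    have : R ≤ g := by
      rw [hg, le_div_iff₀ (by positivity), hR]
      gcongr
    nlinarith
  have hgR : g ≤ R := by
    rw [hg, div_le_iff₀ (by positivity), hR]
    gcongr
  set f := lam / (1 + x) ^ d with hf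
  have hf0 : 0 < f := by positivity
  set u := Real.log ((1 + x) / (1 + y)) with hu
  have hE : Real.exp u = (1 + x) / (1 + y) := Real.exp_log (by positivity)
  set w := u / y with hw
  have hdy : d * y = 1 + g := by linarith
  have hw2 : d * u = w * (1 + g) := by
    rw [hw, ← hdy]; field_simp
  have h1 : x / (1 + x) ≤ y / (1 + y) * Real.exp w := by
    have e1 : 1 - u ≤ (1 + y) / (1 + x) := by
      have := Real.add_one_le_exp (-u)
      rw [Real.exp_neg, hE, inv_div] at this
      linarith
    have e2 : w + 1 ≤ Real.exp w := Real.add_one_le_exp w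
    have e3 : x / (1 + x) ≤ y / (1 + y) * (w + 1) := by
      have : y / (1 + y) * (w + 1) = (u + y) / (1 + y) := by rw [hw]; field_simp
      rw [this, le_div_iff₀ (by positivity)]
      have : x / (1 + x) * (1 + y) = (1 + y) - (1 + y) / (1 + x) := by field_simp; ring
      linarith
    exact e3.trans (by gcongr)
  have h2 : f / (1 + f) ≤ g / (1 + g) * Real.exp (-w) := by
    have hfg : g = f * Real.exp (w * (1 + g)) := by
      rw [← hw2, Real.exp_nat_mul, hE, hf, hg, div_pow]; field_simp
    have e1 : 1 - w ≤ Real.exp (-w) := by linarith [Real.add_one_le_exp (-w)]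
    have e2 : w * g + 1 ≤ Real.exp (w * g) := Real.add_one_le_exp _
    have e3 : 1 + g ≤ g * Real.exp (-w) + Real.exp (w * g) := by nlinarith
    have e4 : f * Real.exp (w * g) = g * Real.exp (-w) := by
      conv_rhs => rw [hfg]
      rw [mul_assoc, ← Real.exp_add]; ring_nf
    rw [div_mul_eq_mul_div, div_le_div_iff₀ (by positivity) (by positivity)]
    nlinarith
  have h3 : x / (1 + x) * (f / (1 + f)) ≤ y / (1 + y) * (g / (1 + g)) := by
    calc _ ≤ (y / (1 + y) * Real.exp w) * (g / (1 + g) * Real.exp (-w)) := by gcongr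
      _ = y / (1 + y) * (g / (1 + g)) * (Real.exp w * Real.exp (-w)) := by ring
      _ = _ := by rw [← Real.exp_add]; simp
  calc (d : ℝ) ^ 2 * (x / (1 + x)) * (f / (1 + f))
      = (d : ℝ) ^ 2 * (x / (1 + x) * (f / (1 + f))) := by ring
    _ ≤ (d : ℝ) ^ 2 * (y / (1 + y) * (g / (1 + g))) := by gcongr
    _ = d * g / (1 + y) := by rw [← hdy]; field_simp
    _ ≤ κ := by
      rw [div_le_iff₀ (by positivity)]
      have : 0 < κ := by
        by_contra! hk
        have : κ * (1 + R) ≤ 0 := by nlinarith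
        nlinarith
      nlinarith

/-- The hardcore tree recursion in the coordinate `t = arsinh √R`. -/
def hyperbolicStep {ι : Type*} (lam : ℝ) (s : Finset ι) (t : ι → ℝ) : ℝ :=
  Real.arsinh (√lam * ∏ i ∈ s, (Real.cosh (t i))⁻¹)

lemma sum_tanh_sq_le {ι : Type*} (s : Finset ι) (t : ι → ℝ) {lam : ℝ} (hlam : 0 < lam) :
    ∃ x : ℝ, 0 ≤ x ∧ (∑ i ∈ s, |Real.tanh (t i)|) ^ 2 ≤ (s.card : ℝ) ^ 2 * (x / (1 + x)) ∧
      (√lam * ∏ i ∈ s, (Real.cosh (t i))⁻¹) ^ 2 = lam / (1 + x) ^ s.card := by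
  rcases s.eq_empty_or_nonempty with rfl | hs
  · exact ⟨0, le_rfl, by simp, by simp [Real.sq_sqrt hlam.le]⟩
  have hk : (0 : ℝ) < s.card := by exact_mod_cast hs.card_pos
  set a : ι → ℝ := fun i => Real.log (Real.cosh (t i) ^ 2) with ha
  have hea : ∀ i, Real.exp (a i) = Real.cosh (t i) ^ 2 := fun i =>
    Real.exp_log (by have := Real.cosh_pos (t i); positivity)
  have ha0 : ∀ i, 0 ≤ a i := fun i => Real.log_nonneg (one_le_pow₀ (Real.one_le_cosh _))
  set m := (∑ i ∈ s, a i) / s.card with hm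
  have hkm : s.card * m = ∑ i ∈ s, a i := by rw [hm]; field_simp
  have hm0 : 0 ≤ m := div_nonneg (Finset.sum_nonneg fun i _ => ha0 i) hk.le
  refine ⟨Real.exp m - 1, by linarith [Real.add_one_le_exp m], ?_, ?_⟩
  · have h1 : (Real.exp m - 1) / (1 + (Real.exp m - 1)) = 1 - Real.exp (-m) := by
      rw [Real.exp_neg]; field_simp; ring
    rw [h1]
    have h2 : ∀ i, |Real.tanh (t i)| ^ 2 = 1 - Real.exp (-(a i)) := by
      intro i
      have := Real.cosh_pos (t i)
      rw [Real.exp_neg, hea, sq_abs, Real.tanh_eq_sinh_div_cosh, div_pow, Real.sinh_sq]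
      field_simp
    have h3 : ∀ i ∈ s, 1 - Real.exp (-(a i)) ≤ 1 - Real.exp (-m) * (1 + m - a i) := by
      intro i _
      have := Real.add_one_le_exp (m - a i)
      have e : Real.exp (-(a i)) = Real.exp (-m) * Real.exp (m - a i) := by
        rw [← Real.exp_add]; ring_nf
      rw [e]
      have := mul_le_mul_of_nonneg_left this (Real.exp_pos (-m)).le
      linarith
    calc (∑ i ∈ s, |Real.tanh (t i)|) ^ 2 ≤ s.card * ∑ i ∈ s, |Real.tanh (t i)| ^ 2 :=
          sq_sum_le_card_mul_sum_sq
      _ ≤ s.card * ∑ i ∈ s, (1 - Real.exp (-m) * (1 + m - a i)) := by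
          gcongr with i hi
          rw [h2]; exact h3 i hi
      _ = _ := by
          rw [Finset.sum_sub_distrib, ← Finset.mul_sum, Finset.sum_sub_distrib, ← hkm]
          simp
          ring
  · rw [add_sub_cancel, ← Real.exp_nat_mul, hkm, Real.exp_sum, mul_pow, Real.sq_sqrt hlam.le,
      ← Finset.prod_pow, div_eq_mul_inv, ← Finset.prod_inv_distrib]
    congr 1
    exact Finset.prod_congr rfl fun i _ => by rw [hea, inv_pow]

lemma hyperbolicStep_lipschitz {ι : Type*} (s : Finset ι) {lam q : ℝ} (hlam : 0 < lam)
    (hq : 0 ≤ q)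
    (h : ∀ x : ℝ, 0 ≤ x → (s.card : ℝ) ^ 2 * (x / (1 + x)) *
      ((lam / (1 + x) ^ s.card) / (1 + lam / (1 + x) ^ s.card)) ≤ q ^ 2)
    {a b : ι → ℝ} {ε : ℝ} (hε : 0 ≤ ε) (hab : ∀ i ∈ s, |a i - b i| ≤ ε) :
    |hyperbolicStep lam s a - hyperbolicStep lam s b| ≤ q * ε := by
  set t : ℝ → ι → ℝ := fun z i => b i + z * (a i - b i) with ht
  have hF : ∀ z, HasDerivAt (fun z => hyperbolicStep lam s (t z))
      ((√(1 + (√lam * ∏ i ∈ s, (Real.cosh (t z i))⁻¹) ^ 2))⁻¹ *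
        ((√lam * ∏ i ∈ s, (Real.cosh (t z i))⁻¹) *
          (-∑ i ∈ s, Real.tanh (t z i) * (a i - b i)))) z := by
    intro z
    have hrew : ∀ z, √lam * ∏ i ∈ s, (Real.cosh (t z i))⁻¹ =
        √lam * Real.exp (-∑ i ∈ s, Real.log (Real.cosh (t z i))) := by
      intro z
      rw [← Finset.sum_neg_distrib, Real.exp_sum]
      congr 1
      refine Finset.prod_congr rfl fun i _ => ?_
      rw [Real.exp_neg, Real.exp_log (Real.cosh_pos _)]
    have h1 : ∀ i ∈ s, HasDerivAt (fun z => Real.log (Real.cosh (t z i)))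
        (Real.tanh (t z i) * (a i - b i)) z := by
      intro i _
      have e1 : HasDerivAt (fun z => t z i) (a i - b i) z := by
        simpa [ht] using ((hasDerivAt_id z).mul_const (a i - b i)).const_add (b i)
      convert e1.cosh.log (Real.cosh_pos _).ne' using 1
      rw [Real.tanh_eq_sinh_div_cosh]; ring
    have h2 := (((HasDerivAt.fun_sum h1).fun_neg.exp).const_mul √lam).arsinh
    simp only [hyperbolicStep, hrew]
    convert h2 using 1
    simp only [smul_eq_mul]
    ring
  have hbound : ∀ z, ‖(√(1 + (√lam * ∏ i ∈ s, (Real.cosh (t z i))⁻¹) ^ 2))⁻¹ *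
        ((√lam * ∏ i ∈ s, (Real.cosh (t z i))⁻¹) *
          (-∑ i ∈ s, Real.tanh (t z i) * (a i - b i)))‖ ≤ q * ε := by
    intro z
    obtain ⟨x, hx0, hx1, hx2⟩ := sum_tanh_sq_le s (t z) hlam
    set y := √lam * ∏ i ∈ s, (Real.cosh (t z i))⁻¹
    have hsum : |∑ i ∈ s, Real.tanh (t z i) * (a i - b i)| ≤
        (∑ i ∈ s, |Real.tanh (t z i)|) * ε := by
      rw [Finset.sum_mul]
      refine (Finset.abs_sum_le_sum_abs _ _).trans (Finset.sum_le_sum fun i hi => ?_)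
      rw [abs_mul]
      exact mul_le_mul_of_nonneg_left (hab i hi) (abs_nonneg _)
    have hkey : (√(1 + y ^ 2))⁻¹ * |y| * (∑ i ∈ s, |Real.tanh (t z i)|) ≤ q := by
      refine abs_le_of_sq_le_sq' ?_ hq |>.2
      rw [mul_pow, mul_pow, inv_pow, Real.sq_sqrt (by positivity), sq_abs, hx2]
      refine le_trans ?_ (h x hx0)
      rw [mul_comm, ← div_eq_inv_mul]
      gcongr
    rw [Real.norm_eq_abs, abs_mul, abs_mul, abs_neg, abs_of_nonneg (by positivity)]
    calc _ ≤ (√(1 + y ^ 2))⁻¹ * (|y| * ((∑ i ∈ s, |Real.tanh (t z i)|) * ε)) := by gcongr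
      _ = (√(1 + y ^ 2))⁻¹ * |y| * (∑ i ∈ s, |Real.tanh (t z i)|) * ε := by ring
      _ ≤ q * ε := by gcongr
  have := (convex_univ (𝕜 := ℝ) (E := ℝ)).norm_image_sub_le_of_norm_hasDerivWithin_le
    (fun z _ => (hF z).hasDerivWithinAt) (fun z _ => hbound z) (Set.mem_univ 0) (Set.mem_univ 1)
  simpa [ht] using this

/-- The children of `v` in the tree rooted at `r`. -/
def children (G : SimpleGraph V) (r v : V) : Finset V :=
  Finset.univ.filter fun w => G.Adj v w ∧ G.dist r w = G.dist r v + 1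

/-- The ratio at `v` produced by the hardcore recursion from the marginals of its children. -/
def ratioStep (G : SimpleGraph V) (r : V) (lam : ℝ) (p : V → ℝ) (v : V) : ℝ :=
  lam * ∏ c ∈ children G r v, (1 - p c)

/-- The marginal at `v` produced by the hardcore recursion. -/
def marginalStep (G : SimpleGraph V) (r : V) (lam : ℝ) (p : V → ℝ) (v : V) : ℝ :=
  ratioStep G r lam p v / (1 + ratioStep G r lam p v)

lemma mem_levelSet {G : SimpleGraph V} {r v : V} {ℓ : ℕ} :
    v ∈ levelSet G r ℓ ↔ G.dist r v = ℓ := by simp [levelSet]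

lemma mem_children {G : SimpleGraph V} {r v w : V} :
    w ∈ children G r v ↔ G.Adj v w ∧ G.dist r w = G.dist r v + 1 := by simp [children]

lemma eq_of_adj_of_dist_eq {W : Type*} {G : SimpleGraph W} (hG : G.IsTree) {r u v w : W}
    (hu : G.Adj u w) (hv : G.Adj v w) (hdu : G.dist r w = G.dist r u + 1)
    (hdv : G.dist r w = G.dist r v + 1) : u = v := by
  obtain ⟨p, hp, hpl⟩ := hG.connected.exists_path_of_dist r w
  have key : ∀ x, G.Adj x w → G.dist r w = G.dist r x + 1 → x = p.penultimate := by
    intro x hx hdx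
    obtain ⟨q, hq, hql⟩ := hG.connected.exists_path_of_dist r x
    have hpath : (q.concat hx).IsPath := by
      refine SimpleGraph.Walk.isPath_of_length_eq_dist _ ?_
      simp [hql, hdx]
    have : p = q.concat hx := by
      have := (hG.isAcyclic.subsingleton_path r w).elim ⟨p, hp⟩ ⟨q.concat hx, hpath⟩
      simpa using congrArg Subtype.val this
    rw [this, SimpleGraph.Walk.penultimate_concat]
  rw [key u hu hdu, key v hv hdv]

lemma exists_parent {W : Type*} {G : SimpleGraph W} (hG : G.IsTree) {r v : W} (hv : v ≠ r) :
    ∃ u, G.Adj v u ∧ G.dist r v = G.dist r u + 1 := by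
  obtain ⟨p, hpl⟩ := hG.connected.exists_walk_length_eq_dist v r
  cases p with
  | nil => exact absurd rfl hv
  | cons h q =>
    rename_i u
    refine ⟨u, h, ?_⟩
    have h1 := SimpleGraph.dist_le q
    rw [SimpleGraph.Walk.length_cons] at hpl
    rcases hG.dist_eq_dist_add_one_of_adj r h with h2 | h2
    · exact h2
    · rw [SimpleGraph.dist_comm (u := r), SimpleGraph.dist_comm (u := r)] at h2
      omega

lemma card_children_le {G : SimpleGraph V} {Δ : ℕ}
    (hdeg : ∀ v : V, (G.neighborSet v).ncard ≤ Δ) (r v : V) : (children G r v).card ≤ Δ := by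
  refine le_trans ?_ (hdeg v)
  rw [← Set.ncard_coe_finset]
  exact Set.ncard_le_ncard (fun w hw => (mem_children.1 hw).1) (Set.toFinite _)

lemma card_children_lt {G : SimpleGraph V} (hG : G.IsTree) {Δ : ℕ}
    (hdeg : ∀ v : V, (G.neighborSet v).ncard ≤ Δ) {r v : V} (hv : v ≠ r) :
    (children G r v).card < Δ := by
  refine lt_of_lt_of_le ?_ (hdeg v)
  obtain ⟨u, hu, hdu⟩ := exists_parent hG hv
  rw [← Set.ncard_coe_finset]
  refine Set.ncard_lt_ncard ⟨fun w hw => (mem_children.1 hw).1, fun hsub => ?_⟩ (Set.toFinite _)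
  have := (mem_children.1 (hsub hu)).2
  omega

lemma sum_finset_split (L : Finset V) (F : Finset V → ℝ) :
    ∑ S : Finset V, F S = ∑ S ∈ Lᶜ.powerset, ∑ T ∈ L.powerset, F (S ∪ T) := by
  rw [← Finset.sum_product']
  refine Finset.sum_bij' (fun S _ => (S \ L, S ∩ L)) (fun A _ => A.1 ∪ A.2) ?_ ?_ ?_ ?_ ?_
  · intro S _
    simp only [Finset.mem_product, Finset.mem_powerset]
    refine ⟨fun x hx => ?_, Finset.inter_subset_right⟩
    simp_all
  · simp
  · intro S _
    exact Finset.sdiff_union_inter S L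
  · rintro ⟨A, B⟩ h
    simp only [Finset.mem_product, Finset.mem_powerset] at h
    have hA : ∀ x ∈ A, x ∉ L := fun x hx => by simpa using h.1 hx
    have hB : ∀ x ∈ B, x ∈ L := fun x hx => h.2 hx
    ext x <;> simp <;> grind
  · intro S _
    simp only [Finset.sdiff_union_inter]

lemma ratioStep_nonneg {G : SimpleGraph V} {r : V} {lam : ℝ} (hlam : 0 < lam) {p : V → ℝ}
    (hp : ∀ u, 0 ≤ p u ∧ p u ≤ 1) (v : V) : 0 ≤ ratioStep G r lam p v :=
  mul_nonneg hlam.le (Finset.prod_nonneg fun c _ => by linarith [hp c])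

lemma ratioStep_le {G : SimpleGraph V} {r : V} {lam : ℝ} (hlam : 0 < lam) {p : V → ℝ}
    (hp : ∀ u, 0 ≤ p u ∧ p u ≤ 1) (v : V) : ratioStep G r lam p v ≤ lam :=
  mul_le_of_le_one_right hlam.le
    (Finset.prod_le_one (fun c _ => by linarith [hp c]) fun c _ => by linarith [hp c])

lemma marginalStep_mem {G : SimpleGraph V} {r : V} {lam : ℝ} (hlam : 0 < lam) {p : V → ℝ}
    (hp : ∀ u, 0 ≤ p u ∧ p u ≤ 1) (v : V) :
    0 ≤ marginalStep G r lam p v ∧ marginalStep G r lam p v ≤ 1 := by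
  have := ratioStep_nonneg (G := G) (r := r) hlam hp v
  exact ⟨by unfold marginalStep; positivity, div_le_one_of_le₀ (by linarith) (by linarith)⟩

lemma one_sub_marginalStep {G : SimpleGraph V} {r : V} {lam : ℝ} (hlam : 0 < lam) {p : V → ℝ}
    (hp : ∀ u, 0 ≤ p u ∧ p u ≤ 1) (v : V) :
    1 - marginalStep G r lam p v = (1 + ratioStep G r lam p v)⁻¹ := by
  have := ratioStep_nonneg (G := G) (r := r) hlam hp v
  unfold marginalStep
  field_simp
  ring

/-- Summing out the bottom level of the pinned measure turns it into the pinned measure one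
level higher. -/
lemma sum_pinWeight_union {G : SimpleGraph V} (hG : G.IsTree) {r : V} {lam : ℝ} (hlam : 0 < lam)
    {p : V → ℝ} (hp : ∀ u, 0 ≤ p u ∧ p u ≤ 1) (ℓ : ℕ) {S : Finset V}
    (hS : S ⊆ (levelSet G r (ℓ + 1))ᶜ) :
    ∑ T ∈ (levelSet G r (ℓ + 1)).powerset,
        pinWeight G r lam (ℓ + 1) (levelSet G r (ℓ + 1)) p (S ∪ T) =
      (∏ v ∈ levelSet G r ℓ, (1 + ratioStep G r lam p v)) *
        pinWeight G r lam ℓ (levelSet G r ℓ) (marginalStep G r lam p) S := by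
  set L := levelSet G r (ℓ + 1) with hL
  have hSL : ∀ v ∈ S, G.dist r v ≠ ℓ + 1 := fun v hv h => by
    have := hS hv
    simp [hL, mem_levelSet, h] at this
  by_cases hI : IsIndepSet G S ∧ ∀ v ∈ S, G.dist r v ≤ ℓ
  swap
  · have h0 : ∀ T ∈ L.powerset, pinWeight G r lam (ℓ + 1) L p (S ∪ T) = 0 := by
      intro T _
      refine if_neg fun h => hI ⟨fun i hi j hj => h.1 i (by simp [hi]) j (by simp [hj]),
        fun v hv => ?_⟩
      have := h.2 v (by simp [hv])
      have := hSL v hv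
      omega
    rw [Finset.sum_eq_zero h0, pinWeight, if_neg hI, mul_zero]
  obtain ⟨hI1, hI2⟩ := hI
  have hterm : ∀ T ∈ L.powerset, pinWeight G r lam (ℓ + 1) L p (S ∪ T) =
      lam ^ S.card * ((∏ u ∈ T, if ∃ v ∈ S, G.Adj v u then 0 else p u) *
        ∏ u ∈ L \ T, (1 - p u)) := by
    intro T hT
    rw [Finset.mem_powerset] at hT
    have hTL : ∀ u ∈ T, G.dist r u = ℓ + 1 := fun u hu => mem_levelSet.1 (hT hu)
    have hinter : L ∩ (S ∪ T) = T := by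
      ext x
      have := @hT x
      have := fun h => hSL x h
      simp only [Finset.mem_inter, Finset.mem_union, hL, mem_levelSet] at *
      tauto
    have hsdiff : L \ (S ∪ T) = L \ T := by
      ext x
      have := fun h => hSL x h
      simp only [Finset.mem_sdiff, Finset.mem_union, hL, mem_levelSet] at *
      tauto
    have hfilter : (S ∪ T).filter (fun v => G.dist r v < ℓ + 1) = S := by
      ext x
      have h1 := hTL x
      have h2 := hI2 x
      simp only [Finset.mem_filter, Finset.mem_union]
      constructor
      · rintro ⟨h | h, h'⟩
        · exact h
        · have := h1 h; omega
      · intro h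
        exact ⟨Or.inl h, by have := h2 h; omega⟩
    unfold pinWeight
    rw [hinter, hsdiff, hfilter]
    by_cases hb : ∃ u ∈ T, ∃ v ∈ S, G.Adj v u
    · obtain ⟨u, hu, v, hv, hvu⟩ := hb
      rw [if_neg fun h => h.1 v (by simp [hv]) u (by simp [hu]) hvu,
        Finset.prod_eq_zero (f := fun u => if ∃ v ∈ S, G.Adj v u then (0 : ℝ) else p u) hu
          (if_pos ⟨v, hv, hvu⟩)]
      simp
    · rw [if_pos, mul_assoc]
      · congr 2
        exact Finset.prod_congr rfl fun u hu => (if_neg fun h => hb ⟨u, hu, h⟩).symm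
      · refine ⟨fun i hi j hj hij => ?_, fun v hv => ?_⟩
        · rcases Finset.mem_union.1 hi with hi | hi <;> rcases Finset.mem_union.1 hj with hj | hj
          · exact hI1 i hi j hj hij
          · exact hb ⟨j, hj, i, hi, hij⟩
          · exact hb ⟨i, hi, j, hj, hij.symm⟩
          · exact hG.dist_ne_of_adj r hij ((hTL i hi).trans (hTL j hj).symm)
        · rcases Finset.mem_union.1 hv with hv | hv
          · exact (hI2 v hv).trans (Nat.le_succ _)
          · exact (hTL v hv).le
  rw [Finset.sum_congr rfl hterm, ← Finset.mul_sum, ← Finset.prod_add]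
  have hblocked : ∏ u ∈ L, ((if ∃ v ∈ S, G.Adj v u then 0 else p u) + (1 - p u)) =
      ∏ v ∈ levelSet G r ℓ ∩ S, ∏ c ∈ children G r v, (1 - p c) := by
    rw [← Finset.prod_biUnion]
    · rw [← Finset.prod_subset (s₁ := (levelSet G r ℓ ∩ S).biUnion (children G r))]
      · refine Finset.prod_congr rfl fun u hu => ?_
        obtain ⟨v, hv, hvu⟩ := Finset.mem_biUnion.1 hu
        rw [if_pos ⟨v, (Finset.mem_inter.1 hv).2, (mem_children.1 hvu).1⟩, zero_add]
      · intro u hu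
        obtain ⟨v, hv, hvu⟩ := Finset.mem_biUnion.1 hu
        rw [hL, mem_levelSet, (mem_children.1 hvu).2, mem_levelSet.1 (Finset.mem_inter.1 hv).1]
      · intro u hu hnu
        rw [if_neg]
        · ring
        · rintro ⟨v, hv, hvu⟩
          have h1 := mem_levelSet.1 hu
          have h2 := hI2 v hv
          have h3 : G.dist r u = G.dist r v + 1 := by
            rcases hG.dist_eq_dist_add_one_of_adj r hvu with h | h <;> omega
          exact hnu (Finset.mem_biUnion.2 ⟨v, Finset.mem_inter.2 ⟨mem_levelSet.2 (by omega), hv⟩,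
            mem_children.2 ⟨hvu, h3⟩⟩)
    · intro v _ w _ hvw
      refine Finset.disjoint_left.2 fun u hu hu' => hvw ?_
      exact eq_of_adj_of_dist_eq hG (mem_children.1 hu).1 (mem_children.1 hu').1
        (mem_children.1 hu).2 (mem_children.1 hu').2
  have hcard : S.card = (S.filter fun v => G.dist r v < ℓ).card + (levelSet G r ℓ ∩ S).card := by
    rw [← Finset.card_filter_add_card_filter_not (s := S) (fun v => G.dist r v < ℓ)]
    congr 2
    ext v
    simp only [Finset.mem_filter, Finset.mem_inter, mem_levelSet]
    constructor
    · rintro ⟨h1, h2⟩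
      have := hI2 v h1
      exact ⟨by omega, h1⟩
    · rintro ⟨h1, h2⟩
      exact ⟨h2, by omega⟩
  have hne : ∀ v, 1 + ratioStep G r lam p v ≠ 0 := fun v => by
    have := ratioStep_nonneg (G := G) (r := r) hlam hp v
    positivity
  rw [pinWeight, if_pos ⟨hI1, hI2⟩, hblocked, hcard, pow_add, mul_assoc,
    ← Finset.prod_inter_mul_prod_sdiff (levelSet G r ℓ) S (fun v => 1 + ratioStep G r lam p v)]
  have e1 : lam ^ (levelSet G r ℓ ∩ S).card *
      ∏ v ∈ levelSet G r ℓ ∩ S, ∏ c ∈ children G r v, (1 - p c) =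
      (∏ v ∈ levelSet G r ℓ ∩ S, (1 + ratioStep G r lam p v)) *
        ∏ v ∈ levelSet G r ℓ ∩ S, marginalStep G r lam p v := by
    rw [← Finset.prod_const, ← Finset.prod_mul_distrib, ← Finset.prod_mul_distrib]
    refine Finset.prod_congr rfl fun v _ => ?_
    rw [marginalStep, mul_div_cancel₀ _ (hne v), ratioStep]
  have e2 : (∏ v ∈ levelSet G r ℓ \ S, (1 + ratioStep G r lam p v)) *
        ∏ v ∈ levelSet G r ℓ \ S, (1 - marginalStep G r lam p v) = 1 := by
    rw [← Finset.prod_mul_distrib]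
    refine Finset.prod_eq_one fun v _ => ?_
    rw [one_sub_marginalStep hlam hp, mul_inv_cancel₀ (hne v)]
  rw [e1]
  linear_combination (-(lam ^ (S.filter fun v => G.dist r v < ℓ).card *
    (∏ v ∈ levelSet G r ℓ ∩ S, (1 + ratioStep G r lam p v)) *
    ∏ v ∈ levelSet G r ℓ ∩ S, marginalStep G r lam p v)) * e2

lemma sum_mul_pinWeight_succ {G : SimpleGraph V} (hG : G.IsTree) {r : V} {lam : ℝ}
    (hlam : 0 < lam) {p : V → ℝ} (hp : ∀ u, 0 ≤ p u ∧ p u ≤ 1) (ℓ : ℕ) (g : Finset V → ℝ)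
    (hg : ∀ S T, T ⊆ levelSet G r (ℓ + 1) → g (S ∪ T) = g S) :
    ∑ S : Finset V, g S * pinWeight G r lam (ℓ + 1) (levelSet G r (ℓ + 1)) p S =
      (∏ v ∈ levelSet G r ℓ, (1 + ratioStep G r lam p v)) *
        ∑ S : Finset V, g S *
          pinWeight G r lam ℓ (levelSet G r ℓ) (marginalStep G r lam p) S := by
  set L := levelSet G r (ℓ + 1) with hL
  rw [sum_finset_split L, Finset.mul_sum]
  rw [← Finset.sum_subset (Finset.subset_univ Lᶜ.powerset)]
  · refine Finset.sum_congr rfl fun S hS => ?_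
    rw [Finset.sum_congr rfl fun T hT => by rw [hg S T (Finset.mem_powerset.1 hT)],
      ← Finset.mul_sum, sum_pinWeight_union hG hlam hp ℓ (Finset.mem_powerset.1 hS)]
    ring
  · intro S _ hS
    rw [pinWeight, if_neg, mul_zero, mul_zero]
    rintro ⟨-, h⟩
    refine hS (Finset.mem_powerset.2 fun v hv => ?_)
    have := h v hv
    simp only [hL, Finset.mem_compl, mem_levelSet]
    omega

lemma ratio_pinWeight_succ {G : SimpleGraph V} (hG : G.IsTree) {r : V} {lam : ℝ}
    (hlam : 0 < lam) {p : V → ℝ} (hp : ∀ u, 0 ≤ p u ∧ p u ≤ 1) (ℓ : ℕ) :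
    ratio (pinWeight G r lam (ℓ + 1) (levelSet G r (ℓ + 1)) p) r =
      ratio (pinWeight G r lam ℓ (levelSet G r ℓ) (marginalStep G r lam p)) r := by
  have hC : ∏ v ∈ levelSet G r ℓ, (1 + ratioStep G r lam p v) ≠ 0 :=
    Finset.prod_ne_zero_iff.2 fun v _ => by
      have := ratioStep_nonneg (G := G) (r := r) hlam hp v
      positivity
  have h1 := sum_mul_pinWeight_succ hG (r := r) hlam hp ℓ (fun _ => 1) (fun _ _ _ => rfl)
  have h2 := sum_mul_pinWeight_succ hG (r := r) hlam hp ℓ (fun S => if r ∈ S then 1 else 0) (by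
    intro S T hT
    have : r ∉ T := fun h => by simpa using mem_levelSet.1 (hT h)
    simp [this])
  simp only [one_mul, ite_mul, zero_mul] at h1 h2
  have : prMem (pinWeight G r lam (ℓ + 1) (levelSet G r (ℓ + 1)) p) r =
      prMem (pinWeight G r lam ℓ (levelSet G r ℓ) (marginalStep G r lam p)) r := by
    rw [prMem, prMem, h1, h2, mul_div_mul_left _ _ hC]
  rw [ratio, this, ratio]

lemma ratio_pinWeight_zero {G : SimpleGraph V} (hG : G.IsTree) (r : V) (lam : ℝ) (p : V → ℝ) :
    ratio (pinWeight G r lam 0 (levelSet G r 0) p) r = p r / (1 - p r) := by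
  have hlev : levelSet G r 0 = {r} := by
    ext v
    rw [mem_levelSet, hG.connected.dist_eq_zero_iff, Finset.mem_singleton, eq_comm]
  have hw : ∀ S : Finset V, pinWeight G r lam 0 (levelSet G r 0) p S =
      if S = ∅ then 1 - p r else if S = {r} then p r else 0 := by
    intro S
    have hcond : (IsIndepSet G S ∧ ∀ v ∈ S, G.dist r v ≤ 0) ↔ S = ∅ ∨ S = {r} := by
      rw [← Finset.subset_singleton_iff]
      constructor
      · rintro ⟨-, h⟩ v hv
        have := hG.connected.dist_eq_zero_iff.1 (Nat.le_zero.1 (h v hv))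
        simp [this]
      · intro h
        have h' : ∀ v ∈ S, v = r := fun v hv => by simpa using h hv
        refine ⟨fun i hi j hj => ?_, fun v hv => by simp [h' v hv]⟩
        rw [h' i hi, h' j hj]
        exact G.loopless.irrefl r
    unfold pinWeight
    rw [hlev]
    by_cases h0 : S = ∅
    · subst h0
      simp [IsIndepSet]
    by_cases h1 : S = {r}
    · subst h1
      simp [IsIndepSet]
    · rw [if_neg (fun h => (hcond.1 h).elim h0 h1), if_neg h0, if_neg h1]
  have hne : ({r} : Finset V) ≠ ∅ := Finset.singleton_ne_empty r
  have hsum : ∑ S : Finset V, pinWeight G r lam 0 (levelSet G r 0) p S = 1 := by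
    simp only [hw]
    rw [← Finset.sum_subset (Finset.subset_univ {∅, {r}}), Finset.sum_pair hne.symm]
    · simp
    · intro S _ hS
      simp only [Finset.mem_insert, Finset.mem_singleton, not_or] at hS
      rw [if_neg hS.1, if_neg hS.2]
  have hsum' : ∑ S : Finset V, (if r ∈ S then pinWeight G r lam 0 (levelSet G r 0) p S else 0) =
      p r := by
    simp only [hw]
    rw [Finset.sum_eq_single {r}]
    · simp
    · intro S _ hS
      by_cases h0 : S = ∅ <;> simp [h0, hS]
    · simp
  rw [ratio, prMem, hsum, hsum', div_one]

lemma iterate_marginalStep_mem {G : SimpleGraph V} {r : V} {lam : ℝ} (hlam : 0 < lam)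
    {p : V → ℝ} (hp : ∀ u, 0 ≤ p u ∧ p u ≤ 1) (n : ℕ) (u : V) :
    0 ≤ (marginalStep G r lam)^[n] p u ∧ (marginalStep G r lam)^[n] p u ≤ 1 := by
  induction n generalizing p with
  | zero => exact hp u
  | succ n ih => exact ih (marginalStep_mem hlam hp)

/-- The root ratio of the pinned measure is computed by iterating the tree recursion. -/
lemma ratio_pinWeight_eq {G : SimpleGraph V} (hG : G.IsTree) {r : V} {lam : ℝ}
    (hlam : 0 < lam) (n : ℕ) {p : V → ℝ} (hp : ∀ u, 0 ≤ p u ∧ p u ≤ 1) :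
    ratio (pinWeight G r lam (n + 1) (levelSet G r (n + 1)) p) r =
      ratioStep G r lam ((marginalStep G r lam)^[n] p) r := by
  have h : ∀ n : ℕ, ∀ p : V → ℝ, (∀ u, 0 ≤ p u ∧ p u ≤ 1) →
      ratio (pinWeight G r lam n (levelSet G r n) p) r =
        (marginalStep G r lam)^[n] p r / (1 - (marginalStep G r lam)^[n] p r) := by
    intro n
    induction n with
    | zero => exact fun p _ => ratio_pinWeight_zero hG r lam p
    | succ n ih =>
      intro p hp
      rw [ratio_pinWeight_succ hG hlam hp, ih _ (marginalStep_mem hlam hp),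
        Function.iterate_succ_apply]
  have hq := iterate_marginalStep_mem (G := G) (r := r) hlam hp n
  rw [h (n + 1) p hp, Function.iterate_succ_apply', one_sub_marginalStep hlam hq, marginalStep]
  have := ratioStep_nonneg (G := G) (r := r) hlam hq r
  field_simp

lemma arsinh_sqrt_ratioStep_marginalStep {G : SimpleGraph V} {r : V} {lam : ℝ} (hlam : 0 < lam)
    {p : V → ℝ} (hp : ∀ u, 0 ≤ p u ∧ p u ≤ 1) (v : V) :
    Real.arsinh √(ratioStep G r lam (marginalStep G r lam p) v) =
      hyperbolicStep lam (children G r v) fun c => Real.arsinh √(ratioStep G r lam p c) := by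
  have h0 := ratioStep_nonneg (G := G) (r := r) hlam hp
  rw [hyperbolicStep, ratioStep, Real.sqrt_mul hlam.le, Real.sqrt_prod]
  · congr 2
    refine Finset.prod_congr rfl fun c _ => ?_
    rw [one_sub_marginalStep hlam hp, Real.cosh_arsinh, Real.sq_sqrt (h0 c), Real.sqrt_inv]
  · intro c _
    linarith [(marginalStep_mem (G := G) (r := r) hlam hp c).2]

lemma le_ratioStep_marginalStep {G : SimpleGraph V} {r : V} {lam : ℝ} (hlam : 0 < lam)
    {p : V → ℝ} (hp : ∀ u, 0 ≤ p u ∧ p u ≤ 1) {v : V} {k : ℕ}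
    (hk : (children G r v).card ≤ k) :
    lam / (1 + lam) ^ k ≤ ratioStep G r lam (marginalStep G r lam p) v := by
  rw [ratioStep, div_eq_mul_inv]
  refine mul_le_mul_of_nonneg_left ?_ hlam.le
  calc ((1 + lam) ^ k)⁻¹ ≤ ((1 + lam) ^ (children G r v).card)⁻¹ := by
        gcongr
        linarith
    _ = ∏ c ∈ children G r v, (1 + lam)⁻¹ := by simp
    _ ≤ _ := by
        refine Finset.prod_le_prod (fun c _ => by positivity) fun c _ => ?_
        have h0 := ratioStep_nonneg (G := G) (r := r) hlam hp c
        rw [one_sub_marginalStep hlam hp]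
        gcongr
        exact ratioStep_le hlam hp c

lemma abs_arsinh_sub_le (a b : ℝ) : |Real.arsinh a - Real.arsinh b| ≤ |a - b| := by
  have := (convex_univ (𝕜 := ℝ) (E := ℝ)).norm_image_sub_le_of_norm_hasDerivWithin_le (C := 1)
    (fun z _ => (Real.hasDerivAt_arsinh z).hasDerivWithinAt) (fun z _ => ?_)
    (Set.mem_univ b) (Set.mem_univ a)
  · simpa using this
  · rw [Real.norm_eq_abs, abs_of_nonneg (by positivity)]
    exact inv_le_one_of_one_le₀ (Real.one_le_sqrt.2 (by nlinarith [sq_nonneg z]))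

lemma sub_le_mul_abs_arsinh_sqrt_sub {lam a b : ℝ} (ha : 0 ≤ a) (hb : 0 ≤ b)
    (hal : a ≤ lam) (hbl : b ≤ lam) :
    a - b ≤ 2 * √lam * √(1 + lam) * |Real.arsinh √a - Real.arsinh √b| := by
  have hl : 0 ≤ lam := ha.trans hal
  have hmem : ∀ c, 0 ≤ c → c ≤ lam → Real.arsinh √c ∈ Set.Icc 0 (Real.arsinh √lam) :=
    fun c _ h1 => ⟨Real.arsinh_nonneg_iff.2 (Real.sqrt_nonneg c),
      Real.arsinh_le_arsinh.2 (Real.sqrt_le_sqrt h1)⟩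
  have := (convex_Icc (0 : ℝ) (Real.arsinh √lam)).norm_image_sub_le_of_norm_hasDerivWithin_le
    (C := 2 * √lam * √(1 + lam)) (f := fun t => Real.sinh t ^ 2)
    (fun z _ => ((Real.hasDerivAt_sinh z).pow 2).hasDerivWithinAt) (fun z hz => ?_)
    (hmem b hb hbl) (hmem a ha hal)
  · simp only [Real.sinh_arsinh, Real.sq_sqrt ha, Real.sq_sqrt hb, Real.norm_eq_abs] at this
    exact (le_abs_self _).trans this
  · have h1 : Real.sinh z ≤ √lam := by
      rw [← Real.sinh_arsinh √lam]
      exact Real.sinh_le_sinh.2 hz.2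
    have h0 : 0 ≤ Real.sinh z := Real.sinh_nonneg_iff.2 hz.1
    have h2 : Real.cosh z ≤ √(1 + lam) := by
      refine Real.le_sqrt_of_sq_le ?_
      rw [Real.cosh_sq]
      have : Real.sinh z ^ 2 ≤ √lam ^ 2 := by gcongr
      rw [Real.sq_sqrt hl] at this
      linarith
    have h3 := Real.cosh_pos z
    rw [Real.norm_eq_abs, abs_of_nonneg (by positivity)]
    simp only [Nat.cast_ofNat, Nat.add_one_sub_one, pow_one]
    gcongr

lemma succ_mul_pow_sub_one_le {y : ℝ} (hy : 1 ≤ y) (d : ℕ) :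
    ((d : ℝ) + 1) * (y ^ d - 1) ≤ d * (y ^ (d + 1) - 1) := by
  induction d with
  | zero => simp
  | succ d ih =>
    have h1 : 1 ≤ y ^ (d + 1) := one_le_pow₀ hy
    push_cast
    have h2 := mul_nonneg (sub_nonneg.2 hy) (sub_nonneg.2 h1)
    have h3 := mul_le_mul_of_nonneg_left ih (by linarith : 0 ≤ y)
    have e1 : y ^ (d + 1) = y * y ^ d := by ring
    have e2 : y ^ (d + 1 + 1) = y * y * y ^ d := by ring
    rw [e1] at h2 h3 ⊢
    rw [e2]
    nlinarith

/-- The initial discrepancy, transported back from hyperbolic coordinates, is absorbed by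
`λ((1+λ)^(d+1) - 1)`. -/
lemma initial_discrepancy_le {lam : ℝ} (hlam : 0 < lam) {d : ℕ} (hd : 1 ≤ d) :
    2 * √lam * √(1 + lam) * (((d : ℝ) + 1) / d * (√lam - √(lam / (1 + lam) ^ d))) ≤
      lam * ((1 + lam) ^ (d + 1) - 1) := by
  have hd0 : (0 : ℝ) < d := by exact_mod_cast hd
  set z := √(1 + lam) with hz
  have hz2 : z ^ 2 = 1 + lam := Real.sq_sqrt (by linarith)
  have hz1 : 1 ≤ z := Real.one_le_sqrt.2 (by linarith)
  have hzd : z ≤ z ^ d := le_self_pow₀ hz1 (by omega)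
  have hsq : √(lam / (1 + lam) ^ d) = √lam / z ^ d := by
    rw [Real.sqrt_div hlam.le, ← hz2, ← pow_mul, mul_comm, pow_mul, Real.sqrt_sq (by positivity)]
  have h1 : 2 * (z * (1 - (z ^ d)⁻¹)) ≤ (1 + lam) ^ d - 1 := by
    have e : (1 + lam) ^ d = z ^ d * z ^ d := by rw [← hz2]; ring
    rw [e]
    have e2 : z * (z ^ d)⁻¹ ≤ 1 := by
      rw [← div_eq_mul_inv]; exact div_le_one_of_le₀ hzd (by positivity)
    have e3 : z * (1 - (z ^ d)⁻¹) ≤ z ^ d - 1 := by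
      have : z * (1 - (z ^ d)⁻¹) = (z ^ d - 1) * (z * (z ^ d)⁻¹) := by field_simp
      rw [this]
      exact mul_le_of_le_one_right (by linarith) e2
    nlinarith
  have h2 := succ_mul_pow_sub_one_le (by linarith : (1 : ℝ) ≤ 1 + lam) d
  calc 2 * √lam * z * (((d : ℝ) + 1) / d * (√lam - √(lam / (1 + lam) ^ d)))
      = √lam ^ 2 * (((d : ℝ) + 1) / d * (2 * (z * (1 - (z ^ d)⁻¹)))) := by
        rw [hsq]; ring
    _ = lam * (((d : ℝ) + 1) / d * (2 * (z * (1 - (z ^ d)⁻¹)))) := by rw [Real.sq_sqrt hlam.le]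
    _ ≤ lam * (((d : ℝ) + 1) / d * ((1 + lam) ^ d - 1)) := by gcongr
    _ ≤ lam * ((1 + lam) ^ (d + 1) - 1) := by
        gcongr
        rw [div_mul_eq_mul_div, div_le_iff₀ hd0]
        linarith

lemma UpToUnique.decay_le {d : ℕ} {lam δ : ℝ} (hlam : 0 < lam) (hδ0 : 0 < δ) (hδ1 : δ < 1)
    (hu : UpToUnique (d + 1) lam δ) {k : ℕ} (hk : k ≤ d) {x : ℝ} (hx : 0 ≤ x) :
    (k : ℝ) ^ 2 * (x / (1 + x)) *
      ((lam / (1 + x) ^ k) / (1 + lam / (1 + x) ^ k)) ≤ √(1 - δ) ^ 2 := by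
  rw [Real.sq_sqrt (by linarith)]
  rcases Nat.eq_zero_or_pos k with rfl | hk0
  · simp; linarith
  · exact symmetric_decay_le hk0 hlam (by linarith) (hu k hk0 (by simpa using hk)) hx

lemma UpToUnique.root_decay_le {d : ℕ} (hd : 1 ≤ d) {lam δ : ℝ} (hlam : 0 < lam) (hδ0 : 0 < δ)
    (hδ1 : δ < 1) (hu : UpToUnique (d + 1) lam δ) {k : ℕ} (hk : k ≤ d + 1) {x : ℝ}
    (hx : 0 ≤ x) :
    (k : ℝ) ^ 2 * (x / (1 + x)) *
      ((lam / (1 + x) ^ k) / (1 + lam / (1 + x) ^ k)) ≤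
      (((d : ℝ) + 1) / d * √(1 - δ)) ^ 2 := by
  have hd0 : (0 : ℝ) < d := by exact_mod_cast hd
  rw [mul_pow]
  rcases Nat.lt_or_ge d k with h | h
  · obtain rfl : k = d + 1 := by omega
    have hmono : (lam / (1 + x) ^ (d + 1)) / (1 + lam / (1 + x) ^ (d + 1)) ≤
        (lam / (1 + x) ^ d) / (1 + lam / (1 + x) ^ d) := by
      have : lam / (1 + x) ^ (d + 1) ≤ lam / (1 + x) ^ d := by
        gcongr
        linarith
      rw [div_le_div_iff₀ (by positivity) (by positivity)]
      nlinarith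
    calc _ ≤ ((d + 1 : ℕ) : ℝ) ^ 2 * (x / (1 + x)) *
          ((lam / (1 + x) ^ d) / (1 + lam / (1 + x) ^ d)) := by gcongr
      _ = (((d : ℝ) + 1) / d) ^ 2 * ((d : ℝ) ^ 2 * (x / (1 + x)) *
          ((lam / (1 + x) ^ d) / (1 + lam / (1 + x) ^ d))) := by
        push_cast; field_simp
      _ ≤ _ := by
        gcongr
        exact hu.decay_le hlam hδ0 hδ1 le_rfl hx
  · refine (hu.decay_le hlam hδ0 hδ1 h hx).trans (le_mul_of_one_le_left (by positivity) ?_)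
    exact one_le_pow₀ (by rw [one_le_div hd0]; linarith)

/-- Contraction of the recursion below the root, in hyperbolic coordinates. -/
lemma abs_arsinh_sqrt_ratioStep_sub_le {d : ℕ} {lam δ : ℝ} (hlam : 0 < lam) (hδ0 : 0 < δ)
    (hδ1 : δ < 1) (hu : UpToUnique (d + 1) lam δ) {G : SimpleGraph V} (hG : G.IsTree)
    (hdeg : ∀ v : V, (G.neighborSet v).ncard ≤ d + 1) {r : V} {p p' : V → ℝ}
    (hp : ∀ u, 0 ≤ p u ∧ p u ≤ 1) (hp' : ∀ u, 0 ≤ p' u ∧ p' u ≤ 1) (n : ℕ) {v : V}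
    (hv : v ≠ r) :
    |Real.arsinh √(ratioStep G r lam ((marginalStep G r lam)^[n + 1] p) v) -
      Real.arsinh √(ratioStep G r lam ((marginalStep G r lam)^[n + 1] p') v)| ≤
      √(1 - δ) ^ n * (√lam - √(lam / (1 + lam) ^ d)) := by
  have hcard : ∀ {v}, v ≠ r → (children G r v).card ≤ d := fun hv =>
    Nat.lt_succ_iff.1 (card_children_lt hG hdeg hv)
  have hD : 0 ≤ √lam - √(lam / (1 + lam) ^ d) :=
    sub_nonneg.2 (Real.sqrt_le_sqrt (div_le_self hlam.le (one_le_pow₀ (by linarith))))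
  induction n generalizing v with
  | zero =>
    simp only [zero_add, Function.iterate_one, pow_zero, one_mul]
    refine (abs_arsinh_sub_le _ _).trans ?_
    have b : ∀ q : V → ℝ, (∀ u, 0 ≤ q u ∧ q u ≤ 1) →
        √(lam / (1 + lam) ^ d) ≤ √(ratioStep G r lam (marginalStep G r lam q) v) ∧
          √(ratioStep G r lam (marginalStep G r lam q) v) ≤ √lam := fun q hq =>
      ⟨Real.sqrt_le_sqrt (le_ratioStep_marginalStep hlam hq (hcard hv)),
        Real.sqrt_le_sqrt (ratioStep_le hlam (marginalStep_mem hlam hq) v)⟩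
    have h1 := b p hp
    have h2 := b p' hp'
    rw [abs_le]
    constructor <;> linarith
  | succ n ih =>
    simp only [Function.iterate_succ_apply' _ (n + 1)]
    rw [arsinh_sqrt_ratioStep_marginalStep hlam (iterate_marginalStep_mem hlam hp _),
      arsinh_sqrt_ratioStep_marginalStep hlam (iterate_marginalStep_mem hlam hp' _),
      pow_succ', mul_assoc]
    refine hyperbolicStep_lipschitz _ hlam (Real.sqrt_nonneg _)
      (fun x hx => hu.decay_le hlam hδ0 hδ1 (hcard hv) hx) (by positivity) fun c hc => ih ?_
    rintro rfl
    simpa using (mem_children.1 hc).2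

/-- The discrepancy bound for two fixed boundary conditions. -/
lemma ratio_pinWeight_sub_le {d : ℕ} (hd : 1 ≤ d) {lam δ : ℝ} (hlam : 0 < lam) (hδ0 : 0 < δ)
    (hδ1 : δ < 1) (hu : UpToUnique (d + 1) lam δ) {G : SimpleGraph V} (hG : G.IsTree)
    (hdeg : ∀ v : V, (G.neighborSet v).ncard ≤ d + 1) {r : V} {p p' : V → ℝ}
    (hp : ∀ u, 0 ≤ p u ∧ p u ≤ 1) (hp' : ∀ u, 0 ≤ p' u ∧ p' u ≤ 1) (n : ℕ) :
    ratio (pinWeight G r lam (n + 2) (levelSet G r (n + 2)) p) r -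
        ratio (pinWeight G r lam (n + 2) (levelSet G r (n + 2)) p') r ≤
      √(1 - δ) ^ n * (lam * ((1 + lam) ^ (d + 1) - 1)) := by
  rw [ratio_pinWeight_eq hG hlam (n + 1) hp, ratio_pinWeight_eq hG hlam (n + 1) hp']
  cases n with
  | zero =>
    simp only [zero_add, Function.iterate_one, pow_zero, one_mul]
    have h1 := ratioStep_le (G := G) (r := r) hlam (marginalStep_mem (G := G) (r := r) hlam hp) r
    have h2 := le_ratioStep_marginalStep hlam hp' (card_children_le hdeg r r)
    have h3 : (1 : ℝ) ≤ (1 + lam) ^ (d + 1) := one_le_pow₀ (by linarith)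
    have h4 : lam - lam / (1 + lam) ^ (d + 1) ≤ lam * ((1 + lam) ^ (d + 1) - 1) := by
      have e : lam - lam / (1 + lam) ^ (d + 1) =
          lam * ((1 + lam) ^ (d + 1) - 1) / (1 + lam) ^ (d + 1) := by field_simp
      rw [e]
      exact div_le_self (mul_nonneg hlam.le (by linarith)) h3
    linarith
  | succ n =>
    have hq := iterate_marginalStep_mem (G := G) (r := r) hlam hp
    have hq' := iterate_marginalStep_mem (G := G) (r := r) hlam hp'
    have hD : 0 ≤ √lam - √(lam / (1 + lam) ^ d) :=
      sub_nonneg.2 (Real.sqrt_le_sqrt (div_le_self hlam.le (one_le_pow₀ (by linarith))))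
    refine (sub_le_mul_abs_arsinh_sqrt_sub (ratioStep_nonneg hlam (hq _) r)
      (ratioStep_nonneg hlam (hq' _) r) (ratioStep_le hlam (hq _) r)
      (ratioStep_le hlam (hq' _) r)).trans ?_
    have hstep : |Real.arsinh √(ratioStep G r lam ((marginalStep G r lam)^[n + 1 + 1] p) r) -
        Real.arsinh √(ratioStep G r lam ((marginalStep G r lam)^[n + 1 + 1] p') r)| ≤
        (((d : ℝ) + 1) / d * √(1 - δ)) *
          (√(1 - δ) ^ n * (√lam - √(lam / (1 + lam) ^ d))) := by
      simp only [Function.iterate_succ_apply' _ (n + 1)]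
      rw [arsinh_sqrt_ratioStep_marginalStep hlam (hq _),
        arsinh_sqrt_ratioStep_marginalStep hlam (hq' _)]
      refine hyperbolicStep_lipschitz _ hlam (by positivity)
        (fun x hx => hu.root_decay_le hd hlam hδ0 hδ1 (card_children_le hdeg r r) hx)
        (by positivity) fun c hc =>
          abs_arsinh_sqrt_ratioStep_sub_le hlam hδ0 hδ1 hu hG hdeg hp hp' n ?_
      rintro rfl
      simpa using (mem_children.1 hc).2
    calc _ ≤ 2 * √lam * √(1 + lam) * ((((d : ℝ) + 1) / d * √(1 - δ)) *
          (√(1 - δ) ^ n * (√lam - √(lam / (1 + lam) ^ d)))) := by gcongr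
      _ = √(1 - δ) ^ (n + 1) * (2 * √lam * √(1 + lam) *
          (((d : ℝ) + 1) / d * (√lam - √(lam / (1 + lam) ^ d)))) := by ring
      _ ≤ _ := by
        exact mul_le_mul_of_nonneg_left (initial_discrepancy_le hlam hd) (by positivity)

/-- **strong spatial mixing on trees.** If `λ` is up-to-`Δ`
unique with gap `δ`, then for every tree of max degree at most `Δ` rooted at `r`
and every `ℓ ≥ 2`, `R_r^max(ℓ) - R_r^min(ℓ) ≤ (1-δ)^((ℓ-2)/2) · λ·((1+λ)^Δ - 1)`. -/
theorem statement16 (Δ : ℕ) (hΔ : 3 ≤ Δ) (δ : ℝ) (hδ0 : 0 < δ) (hδ1 : δ < 1)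
    (lam : ℝ) (hlam : 0 < lam) (hu : UpToUnique Δ lam δ)
    (V : Type) [Fintype V] (G : SimpleGraph V) (hG : G.IsTree)
    (hdeg : ∀ v : V, (G.neighborSet v).ncard ≤ Δ)
    (r : V) (ℓ : ℕ) (hℓ : 2 ≤ ℓ) :
    Rmax G r lam ℓ - Rmin G r lam ℓ
      ≤ (1 - δ) ^ (((ℓ : ℝ) - 2) / 2) * (lam * ((1 + lam) ^ Δ - 1)) := by
  obtain ⟨d, rfl⟩ : ∃ d, Δ = d + 1 := ⟨Δ - 1, by omega⟩
  obtain ⟨n, rfl⟩ : ∃ n, ℓ = n + 2 := ⟨ℓ - 2, by omega⟩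
  have hpow : (1 - δ) ^ ((((n + 2 : ℕ) : ℝ) - 2) / 2) = √(1 - δ) ^ n := by
    rw [Real.sqrt_eq_rpow, ← Real.rpow_natCast, ← Real.rpow_mul (by linarith)]
    congr 1
    push_cast
    ring
  have hne : {x : ℝ | ∃ p : V → ℝ, (∀ u, 0 ≤ p u ∧ p u ≤ 1) ∧
      x = ratio (pinWeight G r lam (n + 2) (levelSet G r (n + 2)) p) r}.Nonempty :=
    ⟨_, fun _ => 0, by simp, rfl⟩
  rw [hpow, sub_le_iff_le_add, Rmax, Rmin]
  refine csSup_le hne ?_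
  rintro _ ⟨p, hp, rfl⟩
  rw [← sub_le_iff_le_add']
  refine le_csInf hne ?_
  rintro _ ⟨p', hp', rfl⟩
  linarith [ratio_pinWeight_sub_le (r := r) (by omega : 1 ≤ d) hlam hδ0 hδ1 hu hG hdeg hp hp' n]

end PaperStmt
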